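/- The infinite series identity 4π/√3 = Σ_{k=0}^{∞} (-1/4)^k · (4/3)_k / (7/6)_k · (30k² + 45k + 16) / ((k + 1)(2k + 1)(3k + 2)) holds, where the sum is over natural numbers k and all quantities are real numbers. -/

import Mathlib

noncomputable def risingFactorial (a : ℝ) (k : ℕ) : ℝ := ∏ i ∈ Finset.range k, (a + i)

/-!
Write `d = 1 - 2a`. The Mittag-Leffler expansion of the cotangent gives
`∑ₙ 1 / ((a + n) (a + n + d)) = π cot (π a) / d`. The summand is the row `k = 0` of
`F (x, k) = (-1)ᵏ (1 - d)ₖ (1 + d)ₖ / ((x + d + k) (x)₂ₖ₊₁)` at `x = a + n`, and `F` has a companion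
`G` with `F (x, k) - F (x, k + 1) = G (x, k) - G (x + 1, k)`. Summing this over `n` and then over
`k` turns the slowly convergent row sum `∑ₙ F (a + n, 0)` into the geometrically convergent column
sum `∑ₖ G (a, k)`, which for `a = d = 1/3` is the asserted series up to the factor `4/3`.
-/

open Filter Topology
open scoped Nat

section WilfZeilberger

variable {α : Type*} [AddCommGroup α] [TopologicalSpace α] [IsTopologicalAddGroup α] [T2Space α]

lemma tsum_sub_tsum_succ_of_wz {F G : ℕ → ℕ → α}
    (hFG : ∀ n k, F n k - F n (k + 1) = G n k - G (n + 1) k)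
    (hF : ∀ k, Summable fun n ↦ F n k) (hG : ∀ k, Tendsto (fun n ↦ G n k) atTop (𝓝 0)) (k : ℕ) :
    ∑' n, F n k - ∑' n, F n (k + 1) = G 0 k := by
  have hsum := ((hF k).hasSum.sub (hF (k + 1)).hasSum).tendsto_sum_nat
  simp only [hFG, Finset.sum_range_sub' (fun n ↦ G n k)] at hsum
  exact tendsto_nhds_unique hsum (by simpa using (hG k).const_sub (G 0 k))

theorem hasSum_of_wz {F G : ℕ → ℕ → α}
    (hFG : ∀ n k, F n k - F n (k + 1) = G n k - G (n + 1) k)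
    (hF : ∀ k, Summable fun n ↦ F n k) (hG : ∀ k, Tendsto (fun n ↦ G n k) atTop (𝓝 0))
    (hrow : Summable fun k ↦ ∑' n, F n k) :
    HasSum (G 0) (∑' n, F n 0) := by
  have hdiff := hrow.hasSum.sub ((hasSum_nat_add_iff' 1).2 hrow.hasSum)
  simpa [tsum_sub_tsum_succ_of_wz hFG hF hG] using hdiff

end WilfZeilberger

section RisingFactorial

lemma risingFactorial_zero (a : ℝ) : risingFactorial a 0 = 1 := Finset.prod_range_zero _

lemma risingFactorial_succ (a : ℝ) (k : ℕ) :
    risingFactorial a (k + 1) = risingFactorial a k * (a + k) :=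
  Finset.prod_range_succ _ _

lemma risingFactorial_succ_left (a : ℝ) (k : ℕ) :
    risingFactorial a (k + 1) = a * risingFactorial (a + 1) k := by
  simp only [risingFactorial, Finset.prod_range_succ', Nat.cast_succ, Nat.cast_zero, add_zero,
    add_assoc, add_comm (1 : ℝ), mul_comm a]

lemma risingFactorial_pos {a : ℝ} (ha : 0 < a) (k : ℕ) : 0 < risingFactorial a k :=
  Finset.prod_pos fun _ _ ↦ by positivity

lemma risingFactorial_two_mul (a : ℝ) (k : ℕ) :
    risingFactorial a (2 * k) =
      4 ^ k * risingFactorial (a / 2) k * risingFactorial ((a + 1) / 2) k := by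
  induction k with
  | zero => simp [risingFactorial_zero]
  | succ k ih =>
    rw [Nat.mul_succ, risingFactorial_succ, risingFactorial_succ, ih, risingFactorial_succ,
      risingFactorial_succ]
    push_cast
    ring

lemma mul_factorial_le_risingFactorial_succ {x : ℝ} (hx : 0 ≤ x) (m : ℕ) :
    x * m ! ≤ risingFactorial x (m + 1) := by
  rw [risingFactorial_succ_left, ← Finset.prod_range_add_one_eq_factorial, Nat.cast_prod]
  gcongr
  refine Finset.prod_le_prod (fun _ _ ↦ by positivity) fun i _ ↦ ?_
  push_cast
  linarith

lemma tendsto_risingFactorial_succ_atTop (m : ℕ) :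
    Tendsto (fun x ↦ risingFactorial x (m + 1)) atTop atTop := by
  refine tendsto_atTop_mono' _ ?_ (tendsto_id.atTop_mul_const (r := (m ! : ℝ)) (by positivity))
  filter_upwards [eventually_ge_atTop 0] with x hx
  exact mul_factorial_le_risingFactorial_succ hx m

end RisingFactorial

section WZPair

/-- The discrete function `F (x, k)` of the Wilf–Zeilberger pair; its row `k = 0` is
`1 / (x (x + d))`. -/
noncomputable def wzSummand (d x : ℝ) (k : ℕ) : ℝ :=
  (-1) ^ k * (risingFactorial (1 - d) k * risingFactorial (1 + d) k) /
    ((x + d + k) * risingFactorial x (2 * k + 1))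

/-- The companion `G (x, k)` of `wzSummand` in the Wilf–Zeilberger pair. Its last factor is the
rational certificate, a quadratic in `x` over `(x + 2k + 1) (x + d + k)`, in partial fractions. -/
noncomputable def wzCompanion (d x : ℝ) (k : ℕ) : ℝ :=
  (-1) ^ k * (risingFactorial (1 - d) k * risingFactorial (1 + d) k) /
    risingFactorial x (2 * k + 1) *
    (1 / (2 * k + 1) + (k + 1 - d) / (x + 2 * k + 1) * (1 / (2 * (k + 1)) + 1 / (x + d + k)))

/-- The factor bounding `wzSummand d x k` relative to `wzSummand d x 0` uniformly in `x`, obtained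
from `x (2k)! ≤ (x)₂ₖ₊₁`. It decays geometrically in `k`. -/
noncomputable def wzDecay (d : ℝ) (k : ℕ) : ℝ :=
  risingFactorial (1 - d) k * risingFactorial (1 + d) k / (2 * k)!

variable {d x : ℝ}

lemma wzSummand_zero (d x : ℝ) : wzSummand d x 0 = 1 / (x * (x + d)) := by
  simp [wzSummand, risingFactorial, mul_comm]

lemma wzSummand_sub_succ (hx : 0 < x) (hxd : 0 < x + d) (k : ℕ) :
    wzSummand d x k - wzSummand d x (k + 1) = wzCompanion d x k - wzCompanion d (x + 1) k := by
  have hP : risingFactorial x (2 * k + 1) ≠ 0 := (risingFactorial_pos hx _).ne'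
  have hshift : risingFactorial (x + 1) (2 * k + 1) =
      risingFactorial x (2 * k + 1) * (x + 2 * k + 1) / x := by
    rw [eq_div_iff hx.ne', mul_comm, ← risingFactorial_succ_left, risingFactorial_succ]
    push_cast
    ring
  have htwo : risingFactorial x (2 * (k + 1) + 1) =
      risingFactorial x (2 * k + 1) * (x + 2 * k + 1) * (x + 2 * k + 2) := by
    rw [Nat.mul_succ, risingFactorial_succ, risingFactorial_succ]
    push_cast
    ring
  have h₀ : x + d + k ≠ 0 := by positivity
  have h₁ : x + d + k + 1 ≠ 0 := by positivity
  simp only [wzSummand, wzCompanion, hshift, htwo, risingFactorial_succ (1 - d),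
    risingFactorial_succ (1 + d), Nat.cast_succ,
    show x + d + (k + 1 : ℝ) = x + d + k + 1 by ring,
    show x + 1 + d + (k : ℝ) = x + d + k + 1 by ring,
    show x + 1 + 2 * (k : ℝ) + 1 = x + 2 * k + 2 by ring]
  field_simp
  ring

lemma abs_wzSummand_le (hx : 0 < x) (hxd : 0 < x + d) (k : ℕ) :
    |wzSummand d x k| ≤ |wzDecay d k| * (1 / (x * (x + d))) := by
  have hden : (x + d) * (x * (2 * k)!) ≤ (x + d + k) * risingFactorial x (2 * k + 1) := by
    refine mul_le_mul ?_ (mul_factorial_le_risingFactorial_succ hx.le _) ?_ ?_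
    · linarith [k.cast_nonneg (α := ℝ)]
    all_goals positivity
  calc |wzSummand d x k|
      = |risingFactorial (1 - d) k * risingFactorial (1 + d) k| /
          ((x + d + k) * risingFactorial x (2 * k + 1)) := by
        have := risingFactorial_pos hx (2 * k + 1)
        rw [wzSummand, abs_div, abs_mul, abs_neg_one_pow, one_mul,
          abs_of_pos (a := (x + d + k) * _) (by positivity)]
    _ ≤ |risingFactorial (1 - d) k * risingFactorial (1 + d) k| /
          ((x + d) * (x * (2 * k)!)) := by gcongr
    _ = |wzDecay d k| * (1 / (x * (x + d))) := by
        rw [wzDecay, abs_div, Nat.abs_cast]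
        field_simp

lemma wzDecay_succ (d : ℝ) (k : ℕ) :
    wzDecay d (k + 1) = ((k + 1) ^ 2 - d ^ 2) / ((2 * k + 1) * (2 * k + 2)) * wzDecay d k := by
  rw [wzDecay, wzDecay, Nat.mul_succ, Nat.factorial_succ, Nat.factorial_succ,
    risingFactorial_succ, risingFactorial_succ]
  push_cast
  field_simp
  ring

lemma summable_wzDecay (d : ℝ) : Summable (wzDecay d) := by
  refine summable_of_ratio_norm_eventually_le (r := 1 / 2) (by norm_num) ?_
  filter_upwards [eventually_ge_atTop ⌈|d|⌉₊] with k hk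
  have hdk : d ^ 2 ≤ (k + 1 : ℝ) ^ 2 :=
    sq_le_sq' (by linarith [neg_abs_le d, Nat.ceil_le.1 hk])
      (by linarith [le_abs_self d, Nat.ceil_le.1 hk])
  rw [wzDecay_succ, norm_mul, Real.norm_of_nonneg (div_nonneg (by linarith) (by positivity))]
  refine mul_le_mul_of_nonneg_right ?_ (norm_nonneg _)
  rw [div_le_iff₀ (by positivity)]
  nlinarith [sq_nonneg d, k.cast_nonneg (α := ℝ)]

lemma tendsto_wzCompanion_atTop (d : ℝ) (k : ℕ) :
    Tendsto (fun x ↦ wzCompanion d x k) atTop (𝓝 0) := by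
  have hlead := (tendsto_risingFactorial_succ_atTop (2 * k)).const_div_atTop
    ((-1) ^ k * (risingFactorial (1 - d) k * risingFactorial (1 + d) k))
  have hlinear (b c : ℝ) : Tendsto (fun x ↦ x + b + c) atTop atTop :=
    tendsto_atTop_add_const_right _ _ (tendsto_atTop_add_const_right _ _ tendsto_id)
  have hfst := (hlinear (2 * k) 1).const_div_atTop (k + 1 - d)
  have hsnd := (hlinear d k).const_div_atTop 1
  simpa only [wzCompanion, zero_mul] using
    hlead.mul ((hfst.mul (hsnd.const_add (1 / (2 * (k + 1) : ℝ)))).const_add (1 / (2 * k + 1 : ℝ)))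

theorem hasSum_wzCompanion (hx : 0 < x) (hxd : 0 < x + d) {S : ℝ}
    (hS : HasSum (fun n : ℕ ↦ 1 / ((x + n) * (x + n + d))) S) : HasSum (wzCompanion d x) S := by
  have hx' (n : ℕ) : 0 < x + n := by positivity
  have hxd' (n : ℕ) : 0 < x + n + d := by linarith [n.cast_nonneg (α := ℝ)]
  have hbound (k n : ℕ) := abs_wzSummand_le (hx' n) (hxd' n) k
  have hwz (n k : ℕ) : wzSummand d (x + n) k - wzSummand d (x + n) (k + 1) =
      wzCompanion d (x + n) k - wzCompanion d (x + (n + 1 : ℕ)) k := by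
    rw [wzSummand_sub_succ (hx' n) (hxd' n), Nat.cast_succ, add_assoc]
  have hrows (k : ℕ) : Summable fun n : ℕ ↦ wzSummand d (x + n) k :=
    .of_norm_bounded (hS.summable.mul_left _) (hbound k)
  have htotal : Summable fun k ↦ ∑' n : ℕ, wzSummand d (x + n) k :=
    .of_norm_bounded ((summable_wzDecay d).abs.mul_right S) fun k ↦
      tsum_of_norm_bounded (hS.mul_left _) (hbound k)
  have hcompanion (k : ℕ) : Tendsto (fun n : ℕ ↦ wzCompanion d (x + n) k) atTop (𝓝 0) :=
    (tendsto_wzCompanion_atTop d k).comp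
      (tendsto_atTop_add_const_left _ _ tendsto_natCast_atTop_atTop)
  simpa only [wzSummand_zero, hS.tsum_eq, Nat.cast_zero, add_zero] using
    hasSum_of_wz hwz hrows hcompanion htotal

end WZPair

section Cotangent

lemma hasSum_sub_succ_of_antitone {f : ℕ → ℝ} {l : ℝ} (hf : Antitone f)
    (hl : Tendsto f atTop (𝓝 l)) : HasSum (fun n ↦ f n - f (n + 1)) (f 0 - l) := by
  rw [hasSum_iff_tendsto_nat_of_nonneg fun n ↦ sub_nonneg.2 (hf n.le_succ)]
  simpa only [Finset.sum_range_sub'] using hl.const_sub (f 0)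

variable {a : ℝ}

lemma ofReal_mem_integerComplement (ha₀ : 0 < a) (ha₁ : a < 1) :
    (a : ℂ) ∈ Complex.integerComplement := by
  rintro ⟨m, hm⟩
  obtain rfl : (m : ℝ) = a := by exact_mod_cast hm
  norm_cast at ha₀ ha₁
  lia

lemma hasSum_cotTerm_ofReal (ha₀ : 0 < a) (ha₁ : a < 1) :
    HasSum (fun n : ℕ ↦ 1 / (a - (n + 1)) + 1 / (a + (n + 1)))
      (Real.pi * Real.cot (Real.pi * a) - 1 / a) := by
  have ha := ofReal_mem_integerComplement ha₀ ha₁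
  rw [← Complex.hasSum_ofReal]
  push_cast
  exact cot_series_rep' ha ▸ (summable_cotTerm ha).hasSum

lemma hasSum_one_div_mul_one_sub (ha₀ : 0 < a) (ha₁ : a < 1) (ha : a ≠ 1 / 2) :
    HasSum (fun n : ℕ ↦ 1 / ((a + n) * (1 - a + n)))
      (Real.pi * Real.cot (Real.pi * a) / (1 - 2 * a)) := by
  have hanti : Antitone fun n : ℕ ↦ 1 / (a + n) := fun m n hmn ↦ by
    dsimp only
    gcongr
  have hlim : Tendsto (fun n : ℕ ↦ 1 / (a + n)) atTop (𝓝 0) :=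
    (tendsto_atTop_add_const_left _ _ tendsto_natCast_atTop_atTop).const_div_atTop _
  have htelescope := hasSum_sub_succ_of_antitone hanti hlim
  convert! ((hasSum_cotTerm_ofReal ha₀ ha₁).add htelescope).div_const (1 - 2 * a) using 1
  · funext n
    have hd : 1 - 2 * a ≠ 0 := fun h ↦ ha (by linarith)
    have hn : 0 < 1 - a + n := by linarith [n.cast_nonneg (α := ℝ)]
    rw [show a - (n + 1) = -(1 - a + n) by ring, eq_div_iff hd]
    push_cast
    field_simp
    ring
  · simp

theorem hasSum_wzCompanion_cot (ha₀ : 0 < a) (ha₁ : a < 1) (ha : a ≠ 1 / 2) :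
    HasSum (wzCompanion (1 - 2 * a) a) (Real.pi * Real.cot (Real.pi * a) / (1 - 2 * a)) := by
  refine hasSum_wzCompanion ha₀ (by linarith) ?_
  convert hasSum_one_div_mul_one_sub ha₀ ha₁ ha using 4
  ring

lemma cot_pi_div_three : Real.cot (Real.pi / 3) = 1 / √3 := by
  rw [Real.cot_eq_cos_div_sin, Real.cos_pi_div_three, Real.sin_pi_div_three]
  field_simp

end Cotangent

lemma four_thirds_mul_wzCompanion_one_third (k : ℕ) :
    4 / 3 * wzCompanion (1 / 3) (1 / 3) k =
      (-1 / 4) ^ k * risingFactorial (4 / 3) k / risingFactorial (7 / 6) k *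
        ((30 * k ^ 2 + 45 * k + 16) / ((k + 1) * (2 * k + 1) * (3 * k + 2))) := by
  have hdup : risingFactorial (1 / 3) (2 * k + 1) =
      1 / 3 * (4 ^ k * risingFactorial (2 / 3) k * risingFactorial (7 / 6) k) := by
    rw [risingFactorial_succ_left, risingFactorial_two_mul]
    norm_num
  have h₁ := (risingFactorial_pos (a := 2 / 3) (by norm_num) k).ne'
  have h₂ := (risingFactorial_pos (a := 7 / 6) (by norm_num) k).ne'
  rw [wzCompanion, hdup, div_pow, show (1 - 1 / 3 : ℝ) = 2 / 3 by norm_num,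
    show (1 + 1 / 3 : ℝ) = 4 / 3 by norm_num]
  field_simp
  ring

theorem stmt_10 :
    4 * Real.pi / Real.sqrt 3 =
      ∑' k : ℕ, (-1/4 : ℝ) ^ k * (risingFactorial (4/3) k) /
        (risingFactorial (7/6) k) * ((30 * (k:ℝ)^2 + 45 * (k:ℝ) + 16) / (((k:ℝ) + 1) * (2 * (k:ℝ) + 1) * (3 * (k:ℝ) + 2))) := by
  have hcot := hasSum_wzCompanion_cot (a := 1 / 3) (by norm_num) (by norm_num) (by norm_num)
  rw [show (1 - 2 * (1 / 3) : ℝ) = 1 / 3 by norm_num, mul_one_div, cot_pi_div_three] at hcot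
  simp only [← four_thirds_mul_wzCompanion_one_third]
  rw [(hcot.mul_left (4 / 3)).tsum_eq]
  ring
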